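/- For an empirical measure μ = (1/n)∑ᵢ δ_{xᵢ} on a compact set X and ν = (1/m)∑ⱼ δ_{yⱼ} on a compact set Y, with continuous cost c, the optimal transport cost satisfies OT_c(μ,ν) = max over φ ∈ ℝᵐ of (1/n)∑ᵢ min_j (c(xᵢ,yⱼ) − φⱼ) + (1/m)∑ⱼ φⱼ, i.e. the semi-dual formulation holds with discrete measures. -/

import Mathlib

open Finset

/-- Admissible couplings of the uniform empirical measures `(1/n)∑δ_{xᵢ}` and
`(1/m)∑δ_{yⱼ}`, represented as `n × m` matrices. -/
def couplings (n m : ℕ) : Set (Matrix (Fin n) (Fin m) ℝ) :=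
  {π | (∀ i j, 0 ≤ π i j) ∧ (∀ i, ∑ j, π i j = 1 / n) ∧ (∀ j, ∑ i, π i j = 1 / m)}

/-- Discrete optimal transport cost between the two empirical measures. -/
noncomputable def OTdiscrete (n m : ℕ) (C : Fin n → Fin m → ℝ) : ℝ :=
  sInf ((fun π : Matrix (Fin n) (Fin m) ℝ => ∑ i, ∑ j, π i j * C i j) '' couplings n m)

/-- Semi-dual objective `(1/n)∑ᵢ min_j (c(xᵢ,yⱼ) − φⱼ) + (1/m)∑ⱼ φⱼ`. -/
noncomputable def semidual (n m : ℕ) [NeZero m] (C : Fin n → Fin m → ℝ)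
    (φ : Fin m → ℝ) : ℝ :=
  (1 / n) * (∑ i, Finset.univ.inf' Finset.univ_nonempty fun j => C i j - φ j)
    + (1 / m) * ∑ j, φ j

/-!
Normalise the optimal cost to `0`: the cost is then a linear functional, nonnegative on the
nonnegative plans whose marginals are proportional to `(p, q)`. The product plan `p ⊗ q` is
everywhere positive, so M. Riesz's theorem extends the cost from the subspace of signed plans with
marginals proportional to `(p, q)` to a nonnegative functional `g` on all signed plans. The cost
minus `g` vanishes on signed plans with zero marginals, so it depends on the marginals only: it is
integration against some `φ i + ψ j`. Nonnegativity of `g` is dual feasibility, and `g` agreeing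
with the cost at `p ⊗ q` is optimality. The optimal potential is thus produced directly, with no
compactness argument.
-/

theorem exists_smul_add_nonneg {ι κ : Type*} [Finite ι] [Finite κ] {w : ι → κ → ℝ}
    (hw : ∀ i j, 0 < w i j) (y : ι → κ → ℝ) : ∃ t : ℝ, 0 ≤ t • w + y := by
  obtain ⟨t, ht⟩ := Finite.exists_le fun k : ι × κ => -y k.1 k.2 / w k.1 k.2
  refine ⟨t, fun i j => ?_⟩
  have := (div_le_iff₀ (hw i j)).1 (ht (i, j))
  simp only [Pi.zero_apply, Pi.add_apply, Pi.smul_apply, smul_eq_mul]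
  linarith

theorem exists_dual_comp_eq_of_ker_le {K V W : Type*} [Field K] [AddCommGroup V] [Module K V]
    [AddCommGroup W] [Module K W] {f : V →ₗ[K] W} {L : Module.Dual K V}
    (hL : LinearMap.ker f ≤ LinearMap.ker L) : ∃ h : Module.Dual K W, h ∘ₗ f = L := by
  change L ∈ LinearMap.range f.dualMap
  rw [LinearMap.range_dualMap_eq_dualAnnihilator_ker]
  exact (Submodule.mem_dualAnnihilator L).2 hL

theorem dual_prod_pi_apply {R ι κ : Type*} [CommSemiring R] [Fintype ι] [Fintype κ]
    [DecidableEq ι] [DecidableEq κ] (h : Module.Dual R ((ι → R) × (κ → R))) (a : ι → R)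
    (b : κ → R) :
    h (a, b) = ∑ i, a i * h (Pi.single i 1, 0) + ∑ j, b j * h (0, Pi.single j 1) := by
  have hbasis : (a, b) = ∑ i, a i • ((Pi.single i 1, 0) : (ι → R) × (κ → R)) +
      ∑ j, b j • ((0, Pi.single j 1) : (ι → R) × (κ → R)) := by
    ext <;> simp [Prod.fst_sum, Prod.snd_sum, Pi.single_apply]
  simp only [hbasis, map_add, map_sum, map_smul, smul_eq_mul]

section FiniteTransport

variable {ι κ : Type*} [Fintype κ]

/-- The `c`-transform `φᶜ` of a potential `φ`, evaluated at the source point of index `i`. -/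
def cTransform [Nonempty κ] (C : ι → κ → ℝ) (φ : κ → ℝ) (i : ι) : ℝ :=
  univ.inf' univ_nonempty fun j => C i j - φ j

theorem cTransform_add_le [Nonempty κ] (C : ι → κ → ℝ) (φ : κ → ℝ) (i : ι) (j : κ) :
    cTransform C φ i + φ j ≤ C i j :=
  le_sub_iff_add_le.1 (inf'_le _ (mem_univ j))

theorem le_cTransform [Nonempty κ] {C : ι → κ → ℝ} {φ : ι → ℝ} {ψ : κ → ℝ}
    (h : ∀ i j, φ i + ψ j ≤ C i j) (i : ι) : φ i ≤ cTransform C ψ i :=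
  le_inf' _ _ fun j _ => le_sub_iff_add_le.2 (h i j)

variable [Fintype ι]

/-- The transport plans (couplings) between measures on the finite types `ι` and `κ`, encoded by
their weights `p` and `q`. -/
def transportPlans (p : ι → ℝ) (q : κ → ℝ) : Set (ι → κ → ℝ) :=
  {π | (∀ i j, 0 ≤ π i j) ∧ (∀ i, ∑ j, π i j = p i) ∧ ∀ j, ∑ i, π i j = q j}

/-- The total cost of a (possibly signed) plan, as a linear functional of the plan. -/
def planCost (C : ι → κ → ℝ) : (ι → κ → ℝ) →ₗ[ℝ] ℝ where
  toFun π := ∑ i, ∑ j, π i j * C i j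
  map_add' π ρ := by simp [add_mul, sum_add_distrib]
  map_smul' t π := by simp [mul_sum, mul_assoc]

/-- The two marginals (row sums and column sums) of a (possibly signed) plan. -/
def marginals : (ι → κ → ℝ) →ₗ[ℝ] (ι → ℝ) × (κ → ℝ) where
  toFun π := (fun i => ∑ j, π i j, fun j => ∑ i, π i j)
  map_add' π ρ := by ext <;> simp [sum_add_distrib]
  map_smul' t π := by ext <;> simp [mul_sum]

/-- The optimal transport cost; its value is the junk `sInf ∅ = 0` when `p` and `q` admit no
transport plan. -/
noncomputable def optimalTransportCost (p : ι → ℝ) (q : κ → ℝ) (C : ι → κ → ℝ) : ℝ :=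
  sInf (planCost C '' transportPlans p q)

/-- The semi-dual objective `φ ↦ ∑ i, p i * φᶜ i + ∑ j, q j * φ j`, whose maximum over `φ` is the
optimal transport cost. -/
def semidualObjective [Nonempty κ] (p : ι → ℝ) (q : κ → ℝ) (C : ι → κ → ℝ) (φ : κ → ℝ) : ℝ :=
  ∑ i, p i * cTransform C φ i + ∑ j, q j * φ j

variable {p : ι → ℝ} {q : κ → ℝ} {C : ι → κ → ℝ}

theorem mem_transportPlans_iff {π : ι → κ → ℝ} :
    π ∈ transportPlans p q ↔ 0 ≤ π ∧ marginals π = (p, q) := by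
  simp [transportPlans, marginals, Pi.le_def, funext_iff]

theorem marginals_product (hp_sum : ∑ i, p i = 1) (hq_sum : ∑ j, q j = 1) :
    marginals (fun i j => p i * q j) = (p, q) := by
  simp [marginals, ← mul_sum, ← sum_mul, hp_sum, hq_sum]

theorem product_mem_transportPlans (hp : ∀ i, 0 ≤ p i) (hq : ∀ j, 0 ≤ q j)
    (hp_sum : ∑ i, p i = 1) (hq_sum : ∑ j, q j = 1) :
    (fun i j => p i * q j) ∈ transportPlans p q :=
  mem_transportPlans_iff.2
    ⟨fun i j => mul_nonneg (hp i) (hq j), marginals_product hp_sum hq_sum⟩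

theorem planCost_mono {C' π : ι → κ → ℝ} (hπ : 0 ≤ π) (hC : ∀ i j, C i j ≤ C' i j) :
    planCost C π ≤ planCost C' π :=
  sum_le_sum fun i _ => sum_le_sum fun j _ => mul_le_mul_of_nonneg_left (hC i j) (hπ i j)

theorem planCost_add_eq {π : ι → κ → ℝ} (hπ : π ∈ transportPlans p q) (φ : ι → ℝ) (ψ : κ → ℝ) :
    planCost (fun i j => φ i + ψ j) π = ∑ i, p i * φ i + ∑ j, q j * ψ j := by
  obtain ⟨-, hrow, hcol⟩ := hπ
  calc ∑ i, ∑ j, π i j * (φ i + ψ j)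
      = ∑ i, ∑ j, π i j * φ i + ∑ j, ∑ i, π i j * ψ j := by
        rw [sum_comm (s := (univ : Finset κ))]
        simp only [mul_add, sum_add_distrib]
    _ = ∑ i, p i * φ i + ∑ j, q j * ψ j := by simp only [← sum_mul, hrow, hcol]

theorem planCost_sub_const {π : ι → κ → ℝ} (hπ : π ∈ transportPlans p q) (hp_sum : ∑ i, p i = 1)
    (v : ℝ) : planCost (fun i j => C i j - v) π = planCost C π - v := by
  have hmass : ∑ i, ∑ j, π i j = 1 := by simp only [hπ.2.1, hp_sum]
  simp [planCost, mul_sub, sum_sub_distrib, ← sum_mul, hmass]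

section WeakDuality

variable [Nonempty κ]

theorem le_semidualObjective (hp : ∀ i, 0 ≤ p i) {φ : ι → ℝ} {ψ : κ → ℝ}
    (h : ∀ i j, φ i + ψ j ≤ C i j) :
    ∑ i, p i * φ i + ∑ j, q j * ψ j ≤ semidualObjective p q C ψ := by
  unfold semidualObjective
  gcongr with i
  · exact hp i
  · exact le_cTransform h i

theorem semidualObjective_le_planCost {π : ι → κ → ℝ} (hπ : π ∈ transportPlans p q)
    (φ : κ → ℝ) : semidualObjective p q C φ ≤ planCost C π :=
  (planCost_add_eq hπ _ _).symm.trans_le (planCost_mono hπ.1 (cTransform_add_le C φ))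

theorem semidualObjective_le_optimalTransportCost (h : (transportPlans p q).Nonempty)
    (φ : κ → ℝ) : semidualObjective p q C φ ≤ optimalTransportCost p q C :=
  le_csInf (h.image _) <| Set.forall_mem_image.2 fun _ hπ => semidualObjective_le_planCost hπ φ

theorem optimalTransportCost_le_planCost {π : ι → κ → ℝ} (hπ : π ∈ transportPlans p q) :
    optimalTransportCost p q C ≤ planCost C π :=
  csInf_le ⟨semidualObjective p q C 0, Set.forall_mem_image.2 fun _ hρ =>
    semidualObjective_le_planCost hρ 0⟩ (Set.mem_image_of_mem _ hπ)

end WeakDuality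

section StrongDuality

theorem eq_zero_of_marginals_eq_zero {π : ι → κ → ℝ} (hπ : 0 ≤ π) (h : marginals π = 0) :
    π = 0 := by
  ext i j
  have hrow : ∑ j, π i j = 0 := congrFun (congrArg Prod.fst h) i
  exact (sum_eq_zero_iff_of_nonneg fun j _ => hπ i j).1 hrow j (mem_univ j)

theorem planCost_nonneg_of_marginals_eq_smul (hp_sum : ∑ i, p i = 1)
    (hC : ∀ π ∈ transportPlans p q, 0 ≤ planCost C π) {π : ι → κ → ℝ} (hπ : 0 ≤ π) {t : ℝ}
    (h : marginals π = t • (p, q)) : 0 ≤ planCost C π := by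
  have ht : 0 ≤ t := by
    have hrow : ∀ i, ∑ j, π i j = t * p i := congrFun (congrArg Prod.fst h)
    have hmass : ∑ i, ∑ j, π i j = t := by simp only [hrow, ← mul_sum, hp_sum, mul_one]
    exact hmass ▸ sum_nonneg fun i _ => sum_nonneg fun j _ => hπ i j
  obtain rfl | ht := ht.eq_or_lt
  · rw [eq_zero_of_marginals_eq_zero hπ (by rw [h, zero_smul]), map_zero]
  · have hmem : t⁻¹ • π ∈ transportPlans p q :=
      mem_transportPlans_iff.2 ⟨smul_nonneg (inv_nonneg.2 ht.le) hπ,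
        by rw [map_smul, h, inv_smul_smul₀ ht.ne']⟩
    have := hC _ hmem
    rw [map_smul, smul_eq_mul] at this
    exact nonneg_of_mul_nonneg_right this (inv_pos.2 ht)

theorem planCost_single [DecidableEq ι] [DecidableEq κ] (C : ι → κ → ℝ) (i : ι) (j : κ) :
    planCost C (Pi.single i (Pi.single j 1)) = C i j := by
  simp [planCost, Pi.single_apply, ite_apply, ite_mul]

theorem marginals_single [DecidableEq ι] [DecidableEq κ] (i : ι) (j : κ) :
    marginals (Pi.single i (Pi.single j 1)) = (Pi.single i 1, Pi.single j 1) := by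
  ext <;> simp [marginals, Pi.single_apply, ite_apply]

theorem exists_nonneg_extension_planCost (hp : ∀ i, 0 < p i) (hq : ∀ j, 0 < q j)
    (hp_sum : ∑ i, p i = 1) (hq_sum : ∑ j, q j = 1)
    (hC : ∀ π ∈ transportPlans p q, 0 ≤ planCost C π) :
    ∃ g : Module.Dual ℝ (ι → κ → ℝ), (∀ π, 0 ≤ π → 0 ≤ g π) ∧
      ∀ π (t : ℝ), marginals π = t • (p, q) → g π = planCost C π := by
  let M : Submodule ℝ (ι → κ → ℝ) := (ℝ ∙ (p, q)).comap marginals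
  have hM {π : ι → κ → ℝ} : π ∈ M ↔ ∃ t : ℝ, t • (p, q) = marginals π :=
    Submodule.mem_span_singleton
  have hnonneg (π : M) (hπ : 0 ≤ (π : ι → κ → ℝ)) : 0 ≤ planCost C π := by
    obtain ⟨t, ht⟩ := hM.1 π.2
    exact planCost_nonneg_of_marginals_eq_smul hp_sum hC hπ ht.symm
  have hcofinal (ρ : ι → κ → ℝ) : ∃ π : M, 0 ≤ (π : ι → κ → ℝ) + ρ := by
    obtain ⟨t, ht⟩ := exists_smul_add_nonneg (fun i j => mul_pos (hp i) (hq j)) ρ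
    exact ⟨⟨_, hM.2 ⟨t, by rw [map_smul, marginals_product hp_sum hq_sum]⟩⟩, ht⟩
  obtain ⟨g, hgM, hg⟩ := riesz_extension (PointedCone.positive ℝ (ι → κ → ℝ))
    ⟨M, (planCost C).domRestrict M⟩ hnonneg hcofinal
  exact ⟨g, hg, fun π t h => hgM ⟨π, hM.2 ⟨t, h.symm⟩⟩⟩

theorem exists_potentials_of_planCost_nonneg (hp : ∀ i, 0 < p i) (hq : ∀ j, 0 < q j)
    (hp_sum : ∑ i, p i = 1) (hq_sum : ∑ j, q j = 1)
    (hC : ∀ π ∈ transportPlans p q, 0 ≤ planCost C π) :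
    ∃ (φ : ι → ℝ) (ψ : κ → ℝ), (∀ i j, φ i + ψ j ≤ C i j) ∧
      ∑ i, p i * φ i + ∑ j, q j * ψ j = 0 := by
  classical
  obtain ⟨g, hg, hgC⟩ := exists_nonneg_extension_planCost hp hq hp_sum hq_sum hC
  have hker : LinearMap.ker marginals ≤ LinearMap.ker (planCost C - g) := fun π hπ => by
    rw [LinearMap.mem_ker, LinearMap.sub_apply,
      hgC π 0 (by rw [LinearMap.mem_ker.1 hπ, zero_smul]), sub_self]
  obtain ⟨h, hh⟩ := exists_dual_comp_eq_of_ker_le hker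
  replace hh π : h (marginals π) = planCost C π - g π := LinearMap.congr_fun hh π
  refine ⟨fun i => h (Pi.single i 1, 0), fun j => h (0, Pi.single j 1), fun i j => ?_, ?_⟩
  · have hslack : 0 ≤ g (Pi.single i (Pi.single j 1)) :=
      hg _ (Pi.single_nonneg.2 (Pi.single_nonneg.2 zero_le_one))
    calc h (Pi.single i 1, 0) + h (0, Pi.single j 1)
        = h (marginals (Pi.single i (Pi.single j 1))) := by
          rw [marginals_single, ← map_add, Prod.mk_add_mk, add_zero, zero_add]
      _ = C i j - g (Pi.single i (Pi.single j 1)) := by rw [hh, planCost_single]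
      _ ≤ C i j := sub_le_self _ hslack
  · have hprod := marginals_product hp_sum hq_sum
    rw [← dual_prod_pi_apply, ← hprod, hh, hgC _ 1 (by rw [hprod, one_smul]), sub_self]

theorem semidual_formulation_discrete_general [Nonempty κ] (hp : ∀ i, 0 < p i)
    (hq : ∀ j, 0 < q j) (hp_sum : ∑ i, p i = 1) (hq_sum : ∑ j, q j = 1) (C : ι → κ → ℝ) :
    IsGreatest (Set.range (semidualObjective p q C)) (optimalTransportCost p q C) := by
  set v := optimalTransportCost p q C
  have hp₀ : ∀ i, 0 ≤ p i := fun i => (hp i).le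
  have hplans : (transportPlans p q).Nonempty :=
    ⟨_, product_mem_transportPlans hp₀ (fun j => (hq j).le) hp_sum hq_sum⟩
  have hweak := semidualObjective_le_optimalTransportCost (C := C) hplans
  obtain ⟨φ, ψ, hle, hsum⟩ := exists_potentials_of_planCost_nonneg (C := fun i j => C i j - v)
    hp hq hp_sum hq_sum fun π hπ => by
      rw [planCost_sub_const hπ hp_sum]
      exact sub_nonneg.2 (optimalTransportCost_le_planCost hπ)
  have hfeasible : ∀ i j, (φ i + v) + ψ j ≤ C i j := fun i j => by linarith [hle i j]
  have hstrong : v ≤ semidualObjective p q C ψ :=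
    calc v = ∑ i, p i * (φ i + v) + ∑ j, q j * ψ j := by
          simp only [mul_add, sum_add_distrib, ← sum_mul, hp_sum]
          linarith
      _ ≤ semidualObjective p q C ψ := le_semidualObjective hp₀ hfeasible
  exact ⟨⟨ψ, (hweak ψ).antisymm hstrong⟩, Set.forall_mem_range.2 hweak⟩

end StrongDuality

end FiniteTransport

theorem OTdiscrete_eq_optimalTransportCost (n m : ℕ) (C : Fin n → Fin m → ℝ) :
    OTdiscrete n m C = optimalTransportCost (fun _ => 1 / n) (fun _ => 1 / m) C :=
  rfl

theorem semidual_eq_semidualObjective (n m : ℕ) [NeZero m] (C : Fin n → Fin m → ℝ)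
    (φ : Fin m → ℝ) :
    semidual n m C φ = semidualObjective (fun _ => 1 / n) (fun _ => 1 / m) C φ := by
  simp only [semidual, semidualObjective, cTransform, mul_sum]

theorem isGreatest_range_semidual (n m : ℕ) [NeZero n] [NeZero m] (C : Fin n → Fin m → ℝ) :
    IsGreatest (Set.range (semidual n m C)) (OTdiscrete n m C) := by
  rw [funext (semidual_eq_semidualObjective n m C), OTdiscrete_eq_optimalTransportCost]
  have hpos (k : ℕ) [NeZero k] : (0 : ℝ) < 1 / k := by simp [NeZero.pos]
  have hsum (k : ℕ) [NeZero k] : ∑ _ : Fin k, (1 / k : ℝ) = 1 := by simp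
  exact semidual_formulation_discrete_general (fun _ => hpos n) (fun _ => hpos m)
    (hsum n) (hsum m) C

/-- Semi-dual (Kantorovich) formulation of discrete optimal transport: the
optimal transport cost equals the maximum of the semi-dual objective,
and the maximum is attained. -/
theorem semidual_formulation_discrete
    {d n m : ℕ} [NeZero n] [NeZero m]
    (X Y : Set (Fin d → ℝ)) (hX : IsCompact X) (hY : IsCompact Y)
    (x : Fin n → (Fin d → ℝ)) (hx : ∀ i, x i ∈ X)
    (y : Fin m → (Fin d → ℝ)) (hy : ∀ j, y j ∈ Y)
    (c : (Fin d → ℝ) → (Fin d → ℝ) → ℝ)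
    (hc : Continuous fun p : (Fin d → ℝ) × (Fin d → ℝ) => c p.1 p.2) :
    ∃ φ : Fin m → ℝ,
      OTdiscrete n m (fun i j => c (x i) (y j)) = semidual n m (fun i j => c (x i) (y j)) φ ∧
      ∀ ψ : Fin m → ℝ,
        semidual n m (fun i j => c (x i) (y j)) ψ ≤ OTdiscrete n m (fun i j => c (x i) (y j)) := by
  obtain ⟨⟨φ, hφ⟩, hmax⟩ := isGreatest_range_semidual n m fun i j => c (x i) (y j)
  exact ⟨φ, hφ.symm, Set.forall_mem_range.1 hmax⟩
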